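/- arXiv:math/0607398 — 2 statements merged into one kernel-verified Lean document; each statement's English description precedes it below -/
import Mathlib

section
/- For $1 \le p \le 2$ and any nonzero $z = (z_1, \dots, z_{n+1}) \in \mathbb{R}^{n+1}$, writing $z = (x, y)$ with $x \in \mathbb{R}^n$, the map $T(z) = x/\|z\|_p$ is differentiable at $z$ (away from coordinate hyperplanes) and the operator norm of its adjoint derivative satisfies $\|D^*T(z)\| \le \frac{1}{\|z\|_p}\left(1 + n^{(2-p)/(2p)}\|T(z)\|_2\right)$. -/
open scoped BigOperators

lemma aux_reflect {E : Type*} [NormedAddCommGroup E] [InnerProductSpace ℝ E] (a t u : E)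
    (h : 0 ≤ inner ℝ a t) :
    -2 * (inner ℝ a u * inner ℝ t u) ≤ ‖a‖ * ‖t‖ * ‖u‖ ^ 2 := by
  by_cases hu : u = 0
  · subst hu; simp
  have hu' : 0 < ‖u‖ ^ 2 := by positivity
  set k : ℝ := 2 * inner ℝ a u / ‖u‖ ^ 2 with hk
  have hk' : k * ‖u‖ ^ 2 = 2 * inner ℝ a u := by rw [hk]; field_simp
  have h1 : ‖a - k • u‖ = ‖a‖ := by
    have : ‖a - k • u‖ ^ 2 = ‖a‖ ^ 2 := by
      rw [norm_sub_sq_real, inner_smul_right, norm_smul, mul_pow, Real.norm_eq_abs, sq_abs]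
      linear_combination k * hk'
    exact (sq_eq_sq₀ (norm_nonneg _) (norm_nonneg _)).1 this
  have h2 : inner ℝ (a - k • u) t ≤ ‖a‖ * ‖t‖ := by
    rw [← h1]; exact real_inner_le_norm _ _
  rw [inner_sub_left, real_inner_smul_left, real_inner_comm] at h2
  have h3 := mul_le_mul_of_nonneg_right h2 hu'.le
  rw [real_inner_comm] at h
  rw [real_inner_comm u t]
  rw [real_inner_comm t u] at *
  have h4 := mul_nonneg h hu'.le
  have h5 : k * ‖u‖ ^ 2 * inner ℝ t u = 2 * inner ℝ a u * inner ℝ t u := by rw [hk']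
  linarith

lemma aux_sq {x y : ℝ} (h : x ^ 2 ≤ y ^ 2) (hy : 0 ≤ y) : x ≤ y :=
  (le_abs_self x).trans (abs_le_of_sq_le_sq h hy)

lemma aux_concave (n : ℕ) (hn : 1 ≤ n) (v : Fin n → ℝ) (hv : ∀ i, 0 ≤ v i) (hs : ∑ i, v i ≤ 1)
    (r : ℝ) (h0 : 0 ≤ r) (h1 : r ≤ 1) : ∑ i, (v i) ^ r ≤ (n : ℝ) ^ (1 - r) := by
  have hn' : (0 : ℝ) < n := by exact_mod_cast hn
  have := (Real.concaveOn_rpow h0 h1).le_map_sum (t := Finset.univ) (w := fun _ : Fin n => (n : ℝ)⁻¹)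
    (p := v) (fun _ _ => by positivity) (by simp [hn'.ne']) (fun i _ => hv i)
  simp only [smul_eq_mul, ← Finset.mul_sum] at this
  have h2 : ((n : ℝ)⁻¹ * ∑ i, v i) ^ r ≤ ((n : ℝ)⁻¹) ^ r := by
    apply Real.rpow_le_rpow _ _ h0
    · exact mul_nonneg (by positivity) (Finset.sum_nonneg fun i _ => hv i)
    · exact mul_le_of_le_one_right (by positivity) hs
  have h3 := this.trans h2
  rw [Real.rpow_sub hn', Real.rpow_one]
  rw [Real.inv_rpow hn'.le] at h3
  rw [inv_mul_le_iff₀ hn'] at h3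
  simpa [div_eq_mul_inv] using h3

theorem adjoint_derivative_T_bound (n : ℕ) (hn : 1 ≤ n) (p : ℝ) (hp1 : 1 ≤ p) (hp2 : p ≤ 2)
    (T : EuclideanSpace ℝ (Fin (n + 1)) → EuclideanSpace ℝ (Fin n))
    (hT : ∀ z : EuclideanSpace ℝ (Fin (n + 1)), ∀ i : Fin n,
      T z i = z i.castSucc / (∑ j, |z j| ^ p) ^ ((1 : ℝ) / p))
    (z : EuclideanSpace ℝ (Fin (n + 1))) (hz : ∀ j, z j ≠ 0) :
    ∃ L : EuclideanSpace ℝ (Fin (n + 1)) →L[ℝ] EuclideanSpace ℝ (Fin n),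
      HasFDerivAt T L z ∧
      ‖ContinuousLinearMap.adjoint L‖ ≤
        (1 / (∑ j, |z j| ^ p) ^ ((1 : ℝ) / p)) *
          (1 + (n : ℝ) ^ ((2 - p) / (2 * p)) * ‖T z‖) := by
  have hp0 : 0 < p := by linarith
  have hn1 : (1 : ℝ) ≤ n := by exact_mod_cast hn
  have hw : ∀ j, 0 < |z j| ^ p := fun j => Real.rpow_pos_of_pos (abs_pos.2 (hz j)) _
  set S : ℝ := ∑ j, |z j| ^ p with hS
  have hSpos : 0 < S := Finset.sum_pos (fun j _ => hw j) Finset.univ_nonempty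
  set N : ℝ := S ^ ((1 : ℝ) / p) with hN
  have hNpos : 0 < N := Real.rpow_pos_of_pos hSpos _
  let gf : Fin (n + 1) → ℝ := fun j => S ^ ((1 : ℝ) / p - 1) * (SignType.sign (z j) * |z j| ^ (p - 1))
  let g : EuclideanSpace ℝ (Fin (n + 1)) := WithLp.toLp 2 gf
  let a : EuclideanSpace ℝ (Fin n) := WithLp.toLp 2 (fun i => gf i.castSucc)
  let P : EuclideanSpace ℝ (Fin (n + 1)) →L[ℝ] EuclideanSpace ℝ (Fin n) :=
    (LinearMap.toContinuousLinearMap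
      { toFun := fun h => WithLp.toLp 2 (fun i : Fin n => h i.castSucc)
        map_add' := fun x y => by ext i; simp
        map_smul' := fun c x => by ext i; simp })
  have hP : ∀ h i, P h i = h i.castSucc := fun h i => rfl
  let L : EuclideanSpace ℝ (Fin (n + 1)) →L[ℝ] EuclideanSpace ℝ (Fin n) :=
    N⁻¹ • (P - (innerSL ℝ g).smulRight (T z))
  have hL : ∀ h i, L h i = N⁻¹ * (h i.castSucc - inner ℝ g h * T z i) := fun h i => by
    simp [L, hP]
  refine ⟨L, ?_, ?_⟩
  · rw [← hasFDerivWithinAt_univ, hasFDerivWithinAt_euclidean]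
    intro i
    rw [hasFDerivWithinAt_univ]
    have hcoord : ∀ j, HasFDerivAt (fun y : EuclideanSpace ℝ (Fin (n + 1)) => y j)
        (EuclideanSpace.proj j : EuclideanSpace ℝ (Fin (n + 1)) →L[ℝ] ℝ) z :=
      fun j => (EuclideanSpace.proj j : EuclideanSpace ℝ (Fin (n + 1)) →L[ℝ] ℝ).hasFDerivAt
    have hj : ∀ j, HasFDerivAt (fun y : EuclideanSpace ℝ (Fin (n + 1)) => |y j| ^ p)
        ((SignType.sign (z j) * p * |z j| ^ (p - 1)) •
          (EuclideanSpace.proj j : EuclideanSpace ℝ (Fin (n + 1)) →L[ℝ] ℝ)) z := by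
      intro j
      have hd : HasDerivAt (fun t : ℝ => |t| ^ p) (SignType.sign (z j) * p * |z j| ^ (p - 1)) (z j) :=
        (hasDerivAt_abs (hz j)).rpow_const (Or.inl (abs_pos.2 (hz j)).ne')
      exact hd.comp_hasFDerivAt z (hcoord j)
    have hsum := HasFDerivAt.fun_sum (u := Finset.univ) (fun j _ => hj j)
    have hNd := HasDerivAt.comp_hasFDerivAt z (Real.hasDerivAt_rpow_const (x := S) (p := 1 / p)
      (Or.inl hSpos.ne')) hsum
    have hinv := HasDerivAt.comp_hasFDerivAt z (hasDerivAt_inv hNpos.ne') hNd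
    have hmul := (hcoord i.castSucc).mul hinv
    have hfun : (fun y => (T y) i) = (fun y : EuclideanSpace ℝ (Fin (n + 1)) => y i.castSucc) *
        (Inv.inv ∘ ((fun x : ℝ => x ^ (1 / p)) ∘ fun y : EuclideanSpace ℝ (Fin (n + 1)) => ∑ j, |y j| ^ p)) := by
      ext y
      simp [hT, div_eq_mul_inv]
    rw [hfun]
    refine hmul.congr_fderiv ?_
    ext h
    have : inner ℝ g h = 1 / p * S ^ (1 / p - 1) *
        ∑ j, (SignType.sign (z j) * p * |z j| ^ (p - 1)) * h j := by
      simp only [PiLp.inner_apply, g, gf, Finset.mul_sum]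
      refine Finset.sum_congr rfl fun j _ => ?_
      simp
      field_simp
    have e1 : (EuclideanSpace.proj i ∘L L) h = L h i := rfl
    first
    | rw [e1, hL, this, hT]
    | (change _ = L h i; rw [hL, this, hT])
    simp [← hS, ← hN]
    simp only [← one_div, ← hN]
    field_simp
    ring
  · set r : ℝ := 2 - 2 / p with hr
    set v : Fin (n + 1) → ℝ := fun j => |z j| ^ p / S with hv
    have hvpos : ∀ j, 0 < v j := fun j => div_pos (hw j) hSpos
    have hvsum : ∑ j, v j = 1 := by
      rw [hv, ← Finset.sum_div, ← hS, div_self hSpos.ne']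
    have hv1 : ∀ j, v j ≤ 1 := fun j => by
      rw [← hvsum]
      exact Finset.single_le_sum (fun i _ => (hvpos i).le) (Finset.mem_univ j)
    have hvn : ∑ i : Fin n, v i.castSucc ≤ 1 := by
      rw [Fin.sum_univ_castSucc] at hvsum
      linarith [hvpos (Fin.last n)]
    have hp2' : 1 ≤ 2 / p := by rw [le_div_iff₀ hp0]; linarith
    have hp1' : 2 / p ≤ 2 := by rw [div_le_iff₀ hp0]; linarith
    have hr0 : 0 ≤ r := by linarith
    have hr1 : r ≤ 1 := by linarith
    have hg2 : ∀ j, gf j ^ 2 = v j ^ r := fun j => by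
      have hzp := abs_pos.2 (hz j)
      have hs : ((SignType.sign (z j) : ℝ)) ^ 2 = 1 := by
        rcases lt_or_gt_of_ne (hz j) with h | h
        · simp [sign_neg h]
        · simp [sign_pos h]
      simp only [gf, hv]
      rw [mul_pow, mul_pow, hs, one_mul, Real.div_rpow (hw j).le hSpos.le, ← Real.rpow_mul hzp.le,
        ← Real.rpow_natCast, ← Real.rpow_natCast, ← Real.rpow_mul hzp.le, ← Real.rpow_mul hSpos.le,
        div_eq_mul_inv (_ ^ (p * r)), ← Real.rpow_neg hSpos.le, mul_comm]
      congr 2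
      · rw [hr]; push_cast; field_simp
      · rw [hr]; push_cast; field_simp; ring
    have hT2 : ∀ i : Fin n, T z i ^ 2 ≤ v i.castSucc := fun i => by
      have hzp := abs_pos.2 (hz i.castSucc)
      have : T z i ^ 2 = v i.castSucc ^ (2 / p) := by
        rw [hT, ← hS, ← hN, div_pow, ← sq_abs (z i.castSucc)]
        simp only [hv]
        rw [Real.div_rpow (hw _).le hSpos.le, ← Real.rpow_mul hzp.le, hN, ← Real.rpow_natCast,
          ← Real.rpow_natCast, ← Real.rpow_mul hSpos.le]
        congr 2
        · push_cast; field_simp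
        · push_cast; field_simp
      rw [this]
      calc v i.castSucc ^ (2 / p) ≤ v i.castSucc ^ (1 : ℝ) :=
            Real.rpow_le_rpow_of_exponent_ge (hvpos _) (hv1 _) hp2'
        _ = _ := Real.rpow_one _
    set C : ℝ := (n : ℝ) ^ ((2 - p) / (2 * p)) with hC
    have hC1 : 1 ≤ C := Real.one_le_rpow hn1 (div_nonneg (by linarith) (by linarith))
    have hC2 : C ^ 2 = (n : ℝ) ^ (1 - r) := by
      rw [hC, ← Real.rpow_natCast, ← Real.rpow_mul (by linarith)]
      congr 1
      rw [hr]; push_cast; field_simp; ring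
    have ha : ‖a‖ ≤ C := by
      apply aux_sq _ (by linarith)
      rw [EuclideanSpace.real_norm_sq_eq, hC2]
      simp only [a, hg2]
      exact aux_concave n hn _ (fun i => (hvpos _).le) hvn r hr0 hr1
    have ht : ‖T z‖ ≤ 1 := by
      apply aux_sq _ (by norm_num)
      rw [EuclideanSpace.real_norm_sq_eq, one_pow]
      exact (Finset.sum_le_sum fun i _ => hT2 i).trans hvn
    have hb : gf (Fin.last n) ^ 2 ≤ 1 := by
      rw [hg2]; exact Real.rpow_le_one (hvpos _).le (hv1 _) hr0
    have hat : 0 ≤ inner ℝ a (T z) := by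
      simp only [PiLp.inner_apply]
      refine Finset.sum_nonneg fun i _ => ?_
      have e : inner ℝ (a i) (T z i) = S ^ ((1 : ℝ) / p - 1) * |z i.castSucc| ^ (p - 1) *
          |z i.castSucc| / N := by
        rw [hT, ← hS, ← hN]
        have e2 : |z i.castSucc| = SignType.sign (z i.castSucc) * z i.castSucc :=
          (sign_mul_self _).symm
        have e3 : inner ℝ (a i) (z i.castSucc / N) = S ^ ((1 : ℝ) / p - 1) * |z i.castSucc| ^ (p - 1) *
          (SignType.sign (z i.castSucc) * z i.castSucc) / N := by
          simp only [a, gf, RCLike.inner_apply, conj_trivial]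
          ring
        rw [e3, ← e2]
      rw [e]
      positivity
    apply ContinuousLinearMap.opNorm_le_bound _ (by positivity)
    intro u
    have hadj : ∀ j, (ContinuousLinearMap.adjoint L u) j =
        inner ℝ (L (EuclideanSpace.single j 1)) u := fun j => by
      rw [← ContinuousLinearMap.adjoint_inner_right]
      simp [EuclideanSpace.inner_single_left]
    have hLs : ∀ j, inner ℝ (L (EuclideanSpace.single j 1)) u =
        N⁻¹ * (inner ℝ (P (EuclideanSpace.single j 1)) u - gf j * inner ℝ (T z) u) := fun j => by
      simp only [L, ContinuousLinearMap.smul_apply, ContinuousLinearMap.sub_apply,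
        ContinuousLinearMap.smulRight_apply, real_inner_smul_left, inner_sub_left, innerSL_apply_apply]
      simp [EuclideanSpace.inner_single_right, g]
    have hc : ∀ i : Fin n, (ContinuousLinearMap.adjoint L u) i.castSucc =
        N⁻¹ * (u i - gf i.castSucc * inner ℝ (T z) u) := fun i => by
      rw [hadj, hLs]
      congr 2
      have : P (EuclideanSpace.single i.castSucc 1) = EuclideanSpace.single i 1 := by
        ext k; rw [hP]; simp [Pi.single_apply]
      rw [this]; simp [EuclideanSpace.inner_single_left]
    have hl : (ContinuousLinearMap.adjoint L u) (Fin.last n) =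
        N⁻¹ * (0 - gf (Fin.last n) * inner ℝ (T z) u) := by
      rw [hadj, hLs]
      congr 2
      have : P (EuclideanSpace.single (Fin.last n) 1) = 0 := by
        ext k; rw [hP]; simp [Pi.single_apply, Fin.castSucc_ne_last]
      rw [this]; simp
    have hnorm : ‖ContinuousLinearMap.adjoint L u‖ ^ 2 = N⁻¹ ^ 2 *
        (‖u - inner ℝ (T z) u • a‖ ^ 2 + gf (Fin.last n) ^ 2 * (inner ℝ (T z) u) ^ 2) := by
      rw [EuclideanSpace.real_norm_sq_eq, Fin.sum_univ_castSucc, hl, EuclideanSpace.real_norm_sq_eq]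
      simp only [hc, mul_pow, ← Finset.mul_sum]
      rw [mul_add]
      congr 1
      · congr 1
        refine Finset.sum_congr rfl fun i _ => ?_
        simp [a]; ring
      · ring
    have href := aux_reflect a (T z) u hat
    have hcs : (inner ℝ (T z) u) ^ 2 ≤ ‖T z‖ ^ 2 * ‖u‖ ^ 2 := by
      rw [← mul_pow, ← sq_abs]
      exact pow_le_pow_left₀ (abs_nonneg _) (abs_real_inner_le_norm _ _) 2
    apply aux_sq _ (by positivity)
    rw [hnorm, mul_pow (_ * _) ‖u‖, mul_pow (1 / N), one_div, mul_assoc]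
    apply mul_le_mul_of_nonneg_left _ (by positivity)
    rw [norm_sub_sq_real, inner_smul_right, norm_smul, mul_pow, Real.norm_eq_abs, sq_abs,
      real_inner_comm a u]
    generalize inner ℝ (T z) u = q at *
    generalize inner ℝ a u = s at *
    generalize gf (Fin.last n) ^ 2 = b at *
    have A : ‖a‖ * ‖T z‖ * ‖u‖ ^ 2 ≤ C * ‖T z‖ * ‖u‖ ^ 2 := by gcongr
    have B : q ^ 2 * ‖a‖ ^ 2 ≤ (‖T z‖ ^ 2 * ‖u‖ ^ 2) * C ^ 2 := by gcongr
    have D : b * q ^ 2 ≤ 1 * (‖T z‖ ^ 2 * ‖u‖ ^ 2) := by gcongr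
    have E : ‖T z‖ ^ 2 * ‖u‖ ^ 2 ≤ C * ‖T z‖ * ‖u‖ ^ 2 := by
      apply mul_le_mul_of_nonneg_right _ (by positivity)
      rw [sq]
      exact mul_le_mul_of_nonneg_right (ht.trans hC1) (norm_nonneg _)
    linarith only [A, B, D, E, href]
end

section
/- Let $\mu$ be a log-concave probability measure on $\mathbb{R}^n$ satisfying, for some $r_0, c > 0$, the tail bound $\mu\{\|x\|_2 \ge r\} \le \exp(-c\, n\, r^p)$ for all $r \ge r_0$, where $1 \le p \le 2$. Then there exist constants $c', C' > 0$ depending only on $c$ and $r_0 n^{(2-p)/(2p)}$ such that every measurable set $A$ with $\mu(A) < \exp(-C' n^{p/2})$ satisfies $\mu^+(A) \ge c' n^{1/p} \mu(A) \log^{1-1/p}(1/\mu(A))$. -/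
open MeasureTheory
open scoped Pointwise

/-- Lower Minkowski content of `A` with respect to `μ` (Euclidean distance). -/
noncomputable def minkContent {E : Type*} [MeasurableSpace E] [PseudoMetricSpace E]
    (μ : Measure E) (A : Set E) : ENNReal :=
  Filter.liminf
    (fun ε : ℝ => (μ {x | Metric.infDist x A ≤ ε} - μ A) / ENNReal.ofReal ε)
    (nhdsWithin 0 (Set.Ioi 0))

/-- Finite-scale estimate: Brunn-Minkowski towards the ball, localised to the ball. -/
lemma minkContent_ball_bound {n : ℕ} (μ : Measure (EuclideanSpace ℝ (Fin n)))
    [IsProbabilityMeasure μ]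
    (hlc : ∀ (A B : Set (EuclideanSpace ℝ (Fin n))), MeasurableSet A → MeasurableSet B →
        ∀ t : ℝ, 0 < t → t < 1 →
          μ ((1 - t) • A + t • B) ≥ μ A ^ (1 - t) * μ B ^ t)
    (A : Set (EuclideanSpace ℝ (Fin n))) (hA : MeasurableSet A) (r : ℝ) (hr : 0 < r)
    (hx : 0 < μ.real (A ∩ Metric.ball 0 r)) :
    ENNReal.ofReal (μ.real (A ∩ Metric.ball 0 r) *
      Real.log (μ.real (Metric.ball 0 r) / μ.real (A ∩ Metric.ball 0 r)) / (2 * r))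
      ≤ minkContent μ A := by
  set B : Set (EuclideanSpace ℝ (Fin n)) := Metric.ball 0 r with hB
  have hBm : MeasurableSet B := measurableSet_ball
  set x := μ.real (A ∩ B) with hxdef
  set m := μ.real B with hmdef
  have hm : 0 < m := hx.trans_le (measureReal_mono Set.inter_subset_right)
  unfold minkContent
  refine Filter.le_liminf_of_le (by isBoundedDefault) ?_
  have hev : Set.Ioo (0 : ℝ) (2 * r) ∈ nhdsWithin (0 : ℝ) (Set.Ioi 0) :=
    Ioo_mem_nhdsGT (by positivity)
  filter_upwards [hev] with ε hε
  obtain ⟨hε0, hε1⟩ := hε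
  set t := ε / (2 * r) with ht
  have ht0 : 0 < t := by positivity
  have ht1 : t < 1 := by rw [ht, div_lt_one (by positivity)]; exact hε1
  have hεt : ε = t * (2 * r) := by rw [ht]; field_simp
  set S : Set (EuclideanSpace ℝ (Fin n)) := {x | Metric.infDist x A ≤ ε} with hS
  have hAS : A ⊆ S := fun y hy => by
    simp only [hS, Set.mem_ofPred_eq, Metric.infDist_zero_of_mem hy]; exact hε0.le
  have hsub : (1 - t) • (A ∩ B) + t • B ⊆ S ∩ B := by
    rintro z ⟨u, ⟨a, ha, rfl⟩, v, ⟨b, hb, rfl⟩, rfl⟩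
    refine ⟨?_, ?_⟩
    · have h1 : Metric.infDist ((1 - t) • a + t • b) A ≤ dist ((1 - t) • a + t • b) a :=
        Metric.infDist_le_dist_of_mem ha.1
      have h2 : dist ((1 - t) • a + t • b) a = t * ‖b - a‖ := by
        rw [dist_eq_norm, show (1 - t) • a + t • b - a = t • (b - a) by module, norm_smul,
          Real.norm_of_nonneg ht0.le]
      have h3 : ‖b - a‖ ≤ 2 * r := by
        have e1 : ‖b‖ < r := by simpa [hB] using hb
        have e2 : ‖a‖ < r := by simpa [hB] using ha.2
        linarith [norm_sub_le b a]
      show Metric.infDist ((1 - t) • a + t • b) A ≤ ε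
      rw [hεt]
      rw [h2] at h1
      exact h1.trans (mul_le_mul_of_nonneg_left h3 ht0.le)
    · exact (convex_ball (0 : EuclideanSpace ℝ (Fin n)) r) ha.2 hb (by linarith) ht0.le (by ring)
  have hE := (hlc (A ∩ B) B (hA.inter hBm) hBm t ht0 ht1).le.trans (measure_mono hsub)
  have hR : x ^ (1 - t) * m ^ t ≤ μ.real (S ∩ B) := by
    have := ENNReal.toReal_mono (measure_ne_top μ _) hE
    rwa [ENNReal.toReal_mul, ← ENNReal.toReal_rpow, ← ENNReal.toReal_rpow] at this
  have hexp : x + t * (x * Real.log (m / x)) ≤ x ^ (1 - t) * m ^ t := by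
    have e : x ^ (1 - t) * m ^ t = x * Real.exp (t * Real.log (m / x)) := by
      rw [Real.rpow_def_of_pos hx, Real.rpow_def_of_pos hm, ← Real.exp_add,
        Real.log_div hm.ne' hx.ne']
      conv_rhs => rw [← Real.exp_log hx]
      rw [Real.log_exp, ← Real.exp_add]
      congr 1; ring
    rw [e]
    nlinarith [Real.add_one_le_exp (t * Real.log (m / x))]
  have hdiff : μ.real (S ∩ B) - x ≤ μ.real S - μ.real A := by
    have e1 := measureReal_inter_add_sdiff (μ := μ) (s := S) hBm
    have e2 := measureReal_inter_add_sdiff (μ := μ) (s := A) hBm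
    have e3 : μ.real (A \ B) ≤ μ.real (S \ B) :=
      measureReal_mono (Set.diff_subset_diff_left hAS)
    linarith
  have hq : μ S - μ A = ENNReal.ofReal (μ.real S - μ.real A) := by
    rw [ENNReal.ofReal_sub _ measureReal_nonneg, ofReal_measureReal, ofReal_measureReal]
  rw [hq, ← ENNReal.ofReal_div_of_pos hε0]
  apply ENNReal.ofReal_le_ofReal
  rw [le_div_iff₀ hε0]
  have : x * Real.log (m / x) / (2 * r) * ε = t * (x * Real.log (m / x)) := by
    rw [ht]; ring
  linarith

/-- Proposition 1, abstract form: a log-concave probability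
measure `μ` on `ℝⁿ` with Euclidean tail bound `μ{‖x‖₂ ≥ r} ≤ exp(-c n r^p)` for
`r ≥ r₀` satisfies, for constants `c', C' > 0` depending only on `c` and
`r₀ n^{(2-p)/(2p)}`, the isoperimetric inequality
`μ⁺(A) ≥ c' n^{1/p} μ(A) log^{1-1/p}(1/μ(A))` whenever `μ(A) < exp(-C' n^{p/2})`. -/
theorem small_set_isoperimetry_logconcave (c K : ℝ) (hc : 0 < c) (hK : 0 < K) :
    ∃ c' C' : ℝ, 0 < c' ∧ 0 < C' ∧
      ∀ (n : ℕ), 1 ≤ n → ∀ (p : ℝ), 1 ≤ p → p ≤ 2 →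
      ∀ (r₀ : ℝ), 0 < r₀ → r₀ * (n : ℝ) ^ ((2 - p) / (2 * p)) = K →
      ∀ (μ : Measure (EuclideanSpace ℝ (Fin n))), IsProbabilityMeasure μ →
      (∀ (A B : Set (EuclideanSpace ℝ (Fin n))), MeasurableSet A → MeasurableSet B →
        ∀ t : ℝ, 0 < t → t < 1 →
          μ ((1 - t) • A + t • B) ≥ μ A ^ (1 - t) * μ B ^ t) →
      (∀ r : ℝ, r₀ ≤ r →
        μ {x | r ≤ ‖x‖} ≤ ENNReal.ofReal (Real.exp (-(c * n * r ^ p)))) →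
      ∀ A : Set (EuclideanSpace ℝ (Fin n)), MeasurableSet A →
        μ A < ENNReal.ofReal (Real.exp (-(C' * (n : ℝ) ^ (p / 2)))) →
        minkContent μ A ≥
          ENNReal.ofReal (c' * (n : ℝ) ^ ((1 : ℝ) / p) * (μ A).toReal *
            (Real.log (1 / (μ A).toReal)) ^ (1 - 1 / p)) := by
  refine ⟨min 1 (c / 2) / 8, c * (1 + K) ^ 2 + 2, by positivity, by positivity, ?_⟩
  intro n hn p hp1 hp2 r₀ hr₀ hKr μ hμ hlc htail A hA hAs
  have hn1 : (1 : ℝ) ≤ n := by exact_mod_cast hn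
  have hn0 : (0 : ℝ) < n := by linarith
  have hp0 : 0 < p := by linarith
  set a := (μ A).toReal with ha
  rcases (ENNReal.toReal_nonneg (a := μ A)).eq_or_lt with h0 | hapos
  · rw [← ha] at h0
    rw [← h0]; simp
  rw [← ha] at hapos
  set C := c * (1 + K) ^ 2 + 2 with hC
  set L := Real.log (1 / a) with hL
  have hC2 : 2 ≤ C := by have : 0 ≤ c * (1 + K) ^ 2 := by positivity
                         linarith
  have haexp : a = Real.exp (-L) := by
    rw [hL, one_div, Real.log_inv, neg_neg, Real.exp_log hapos]
  have hLn : C * (n : ℝ) ^ (p / 2) < L := by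
    have h : a < Real.exp (-(C * (n : ℝ) ^ (p / 2))) := by
      rw [ha]
      exact (ENNReal.lt_ofReal_iff_toReal_lt (measure_ne_top μ A)).1 hAs
    rw [haexp, Real.exp_lt_exp] at h
    linarith
  have hnp : 1 ≤ (n : ℝ) ^ (p / 2) := Real.one_le_rpow hn1 (by positivity)
  have hL2 : 2 < L := by nlinarith
  have hL0 : 0 < L := by linarith
  have hlog2 := Real.log_two_lt_d9
  have ha2 : a ≤ 1 / 2 := by
    have : Real.exp (-L) ≤ Real.exp (-Real.log 2) := Real.exp_le_exp.2 (by linarith)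
    rw [Real.exp_neg (Real.log 2), Real.exp_log (by norm_num)] at this
    rw [haexp]; linarith
  set q := 2 * L / (c * n) with hq
  have hq0 : 0 < q := by positivity
  set r := q ^ (1 / p) with hr
  have hr0 : 0 < r := by positivity
  have hrp : r ^ p = q := by
    rw [hr, ← Real.rpow_mul hq0.le, one_div_mul_cancel hp0.ne', Real.rpow_one]
  have hrr : r₀ ≤ r := by
    rw [← Real.rpow_le_rpow_iff hr₀.le hr0.le hp0, hrp]
    have hKp : r₀ ^ p * (n : ℝ) ^ (1 - p / 2) = K ^ p := by
      rw [← hKr, Real.mul_rpow hr₀.le (by positivity), ← Real.rpow_mul hn0.le]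
      congr 2
      field_simp
    have hK2 : K ^ p ≤ (1 + K) ^ 2 := by
      calc K ^ p ≤ (1 + K) ^ p := Real.rpow_le_rpow hK.le (by linarith) hp0.le
        _ ≤ (1 + K) ^ (2 : ℝ) := Real.rpow_le_rpow_of_exponent_le (by linarith) hp2
        _ = _ := by norm_num
    have hnn : (n : ℝ) ^ (1 - p / 2) * (n : ℝ) ^ (p / 2) = n := by
      rw [← Real.rpow_add hn0]; simp
    rw [hq, le_div_iff₀ (by positivity)]
    calc r₀ ^ p * (c * n) = c * (r₀ ^ p * (n : ℝ) ^ (1 - p / 2)) * (n : ℝ) ^ (p / 2) := by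
          rw [← hnn]
          rw [hnn]
          linear_combination (-(c * r₀ ^ p)) * hnn
      _ = c * K ^ p * (n : ℝ) ^ (p / 2) := by rw [hKp]
      _ ≤ C * (n : ℝ) ^ (p / 2) := by
          apply mul_le_mul_of_nonneg_right _ (by positivity)
          have := mul_le_mul_of_nonneg_left hK2 hc.le
          linarith
      _ ≤ 2 * L := by linarith
  have hcompl : μ.real (Metric.ball 0 r)ᶜ ≤ a ^ 2 := by
    have h := htail r hrr
    have e : (Metric.ball (0 : EuclideanSpace ℝ (Fin n)) r)ᶜ = {x | r ≤ ‖x‖} := by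
      ext; simp
    have e2 : Real.exp (-(c * n * r ^ p)) = a ^ 2 := by
      rw [hrp, haexp, ← Real.exp_nat_mul, hq]
      congr 1
      field_simp
      norm_num
    rw [e2] at h
    rw [e]
    exact ENNReal.toReal_le_of_le_ofReal (by positivity) h
  set B : Set (EuclideanSpace ℝ (Fin n)) := Metric.ball 0 r with hB
  have hBm : MeasurableSet B := measurableSet_ball
  have hm : 1 / 2 ≤ μ.real B := by
    have := probReal_compl_eq_one_sub (μ := μ) hBm
    nlinarith
  have hx : a / 2 ≤ μ.real (A ∩ B) := by
    have e1 := measureReal_inter_add_sdiff (μ := μ) (s := A) hBm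
    have e2 : μ.real (A \ B) ≤ μ.real Bᶜ := measureReal_mono (fun y hy => hy.2)
    have e3 : μ.real A = a := rfl
    nlinarith
  have hx0 : 0 < μ.real (A ∩ B) := by linarith
  have hxa : μ.real (A ∩ B) ≤ a := measureReal_mono Set.inter_subset_left
  refine ge_iff_le.2 (le_trans (ENNReal.ofReal_le_ofReal ?_)
    (minkContent_ball_bound μ hlc A hA r hr0 hx0))
  have hlog : L / 2 ≤ Real.log (μ.real B / μ.real (A ∩ B)) := by
    have h1 : Real.log ((1 / 2) / a) ≤ Real.log (μ.real B / μ.real (A ∩ B)) := by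
      apply Real.log_le_log (by positivity)
      gcongr
    have h2 : Real.log ((1 / 2) / a) = L - Real.log 2 := by
      rw [hL, ← Real.log_div (by positivity) (by norm_num)]
      congr 1; ring
    linarith
  have hmain : a / 2 * (L / 2) ≤ μ.real (A ∩ B) * Real.log (μ.real B / μ.real (A ∩ B)) := by
    gcongr
  rw [le_div_iff₀ (by positivity)]
  refine le_trans ?_ hmain
  have hp1' : 1 / p ≤ 1 := by rw [div_le_one hp0]; exact hp1
  have hp0' : 0 < 1 / p := by positivity
  have hrn : min 1 (c / 2) * (n : ℝ) ^ (1 / p) * r ≤ L ^ (1 / p) := by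
    have h1 : min 1 (c / 2) ≤ (c / 2) ^ (1 / p) := by
      have hmin0 : 0 < min 1 (c / 2) := by positivity
      calc min 1 (c / 2) = (min 1 (c / 2)) ^ (1 : ℝ) := (Real.rpow_one _).symm
        _ ≤ (min 1 (c / 2)) ^ (1 / p) :=
          Real.rpow_le_rpow_of_exponent_ge hmin0 (min_le_left _ _) hp1'
        _ ≤ _ := Real.rpow_le_rpow hmin0.le (min_le_right _ _) hp0'.le
    have h2 : (c / 2) ^ (1 / p) * (n : ℝ) ^ (1 / p) * r = L ^ (1 / p) := by
      rw [hr, ← Real.mul_rpow (by positivity) hn0.le, ← Real.mul_rpow (by positivity) hq0.le]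
      congr 1
      rw [hq]; field_simp
    rw [← h2]
    gcongr
  have hLL : L ^ (1 / p) * L ^ (1 - 1 / p) = L := by
    rw [← Real.rpow_add hL0]; simp
  calc min 1 (c / 2) / 8 * (n : ℝ) ^ (1 / p) * a * L ^ (1 - 1 / p) * (2 * r)
      = (min 1 (c / 2) * (n : ℝ) ^ (1 / p) * r) * (a * L ^ (1 - 1 / p) / 4) := by ring
    _ ≤ L ^ (1 / p) * (a * L ^ (1 - 1 / p) / 4) :=
        mul_le_mul_of_nonneg_right hrn (by positivity)
    _ = a / 2 * (L / 2) := by linear_combination (a / 4) * hLL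
end
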